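/- Let r ≥ 1 be an integer and let B_r = {x ∈ V : d_G(0,x) ≤ r} be the ball of radius r about 0 in the graph metric. Suppose every vertex of G has degree at most 6 and that R_eff(0, V∖B_r) ≤ r. Then the number of collisions of two independent simple random walks on G killed upon exiting B_r, both started at 0, satisfies the second-moment bound E_{0,0}(Z_{B_r}²) ≤ 144r² + 6r. -/

import Mathlib

open MeasureTheory ENNReal
open scoped Classical

noncomputable section

variable {V : Type*}

/-- The cemetery-extended state space `B ∪ {†}` carries the discrete σ-algebra. -/
instance : MeasurableSpace (Option V) := ⊤

/-- One-step transition probabilities of the simple random walk on `G` killed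
upon exiting `B`; the cemetery state `†` is `none`. -/
def killedStep (G : SimpleGraph V) [G.LocallyFinite] (B : Set V) :
    Option V → Option V → ℝ≥0∞
  | some x, some y =>
      if x ∈ B ∧ G.Adj x y ∧ y ∈ B then ((G.degree x : ℝ≥0∞))⁻¹ else 0
  | some x, none =>
      if x ∈ B then
        (((G.neighborFinset x).filter (fun y => y ∉ B)).card : ℝ≥0∞) / (G.degree x : ℝ≥0∞)
      else 1
  | none, some _ => 0
  | none, none => 1

/-- Probability that the killed walk started at `a` follows `w` for its first `n` steps. -/
def killedCylProb (G : SimpleGraph V) [G.LocallyFinite] (B : Set V) (a : V)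
    {n : ℕ} (w : Fin (n + 1) → Option V) : ℝ≥0∞ :=
  (if w 0 = some a then 1 else 0) *
    ∏ i : Fin n, killedStep G B (w i.castSucc) (w i.succ)

/-- `μ` is the law of the simple random walk on `G` killed upon exiting `B`, started at `a`:
it is a probability measure on trajectories with the correct finite-dimensional
distributions. -/
def IsKilledWalkLaw (G : SimpleGraph V) [G.LocallyFinite] (B : Set V)
    (a : V) (μ : Measure (ℕ → Option V)) : Prop :=
  IsProbabilityMeasure μ ∧
    ∀ (n : ℕ) (w : Fin (n + 1) → Option V),
      μ {ω | ∀ i : Fin (n + 1), ω i = w i} = killedCylProb G B a w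

/-- `ν` is the joint law of two independent killed walks started at `a` and `b`. -/
def IsKilledPairLaw (G : SimpleGraph V) [G.LocallyFinite] (B : Set V)
    (a b : V) (ν : Measure (ℕ → Option V × Option V)) : Prop :=
  IsProbabilityMeasure ν ∧
    ∀ (n : ℕ) (w : Fin (n + 1) → Option V × Option V),
      ν {ω | ∀ i : Fin (n + 1), ω i = w i} =
        killedCylProb G B a (fun i => (w i).1) * killedCylProb G B b (fun i => (w i).2)

/-- The number of collisions `Z_B = Σ_{n ≥ 0} 1(Xₙ = Yₙ ∈ B)` of the two coordinate
walks along a trajectory. -/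
def collisions (B : Set V) (ω : ℕ → Option V × Option V) : ℝ≥0∞ :=
  ∑' n : ℕ, if ∃ x ∈ B, (ω n).1 = some x ∧ (ω n).2 = some x then 1 else 0

/-- The Dirichlet energy `ℰ(f,f) = (1/2) Σ_{x∼y} (f x - f y)²` of `f : V → ℝ`. -/
def energy (G : SimpleGraph V) (f : V → ℝ) : ℝ≥0∞ :=
  (1 / 2) * ∑' p : V × V,
    if G.Adj p.1 p.2 then ENNReal.ofReal ((f p.1 - f p.2) ^ 2) else 0

/-- The effective resistance between `A₁` and `A₂` in `G`, every edge being a unit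
resistor: its inverse is the infimum of the energies of finite-energy functions
that are `1` on `A₁` and `0` on `A₂`. -/
def effRes (G : SimpleGraph V) (A₁ A₂ : Set V) : ℝ≥0∞ :=
  (⨅ f ∈ {f : V → ℝ | energy G f ≠ ⊤ ∧ (∀ x ∈ A₁, f x = 1) ∧ ∀ x ∈ A₂, f x = 0},
    energy G f)⁻¹

/-!
Expanding the square, `Z² ≤ 2 ∑_{m ≤ n} 1(X_m = Y_m) 1(X_n = Y_n)`, so by the Markov property
`E(Z²)` is at most twice the expected number of collisions from `o` times its supremum over the
starting points `x ∈ B`. The latter expectation is `∑ₙ ∑_y p_n(x,y)²`. Reversibility with respect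
to the degree turns `p_n(x,y)²` into `p_n(x,y) p_n(y,x)` up to a factor `D / deg x`, and summing
over `y` gives `p_{2n}(x,x)`, so the expectation is bounded through the Green function
`∑ₙ p_n(x,x) = deg x · R_eff(x, Bᶜ)`. Finally, `x ↦ R_eff(x, Bᶜ)` changes by at most `1` along an
edge, hence is at most `R_eff(o, Bᶜ) + r` on a ball of radius `r` about `o`.
-/

/-! ### Balls in locally finite graphs -/

lemma finite_setOf_dist_le (G : SimpleGraph V) [G.LocallyFinite] (hconn : G.Connected)
    (o : V) (n : ℕ) : {x | G.dist o x ≤ n}.Finite := by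
  induction n generalizing o with
  | zero => simp [hconn.dist_eq_zero_iff]
  | succ n ih =>
    refine (((G.neighborFinset o).finite_toSet.biUnion fun y _ ↦ ih y).insert o).subset ?_
    intro x (hx : G.dist o x ≤ n + 1)
    obtain ⟨p, hp⟩ := hconn.exists_walk_length_eq_dist o x
    cases p with
    | nil => exact Set.mem_insert o _
    | @cons _ y _ hoy q =>
      have hyx : G.dist y x ≤ n := by
        have := SimpleGraph.dist_le q
        rw [SimpleGraph.Walk.length_cons] at hp
        omega
      exact Set.mem_insert_of_mem o (Set.mem_biUnion (by simpa using hoy) hyx)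

lemma countable_of_connected_locallyFinite (G : SimpleGraph V) [G.LocallyFinite]
    (hconn : G.Connected) : Countable V := by
  obtain ⟨o⟩ := hconn.nonempty
  have hcover : ⋃ n, {x | G.dist o x ≤ n} = Set.univ :=
    Set.iUnion_eq_univ_iff.2 fun x ↦ ⟨G.dist o x, le_refl (G.dist o x)⟩
  rw [← Set.countable_univ_iff, ← hcover]
  exact Set.countable_iUnion fun n ↦ (finite_setOf_dist_le G hconn o n).countable

/-! ### Chains with a countable state space -/

lemma tsum_ite_le_eq_tsum_add (f : ℕ → ℝ≥0∞) (m : ℕ) :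
    ∑' n, (if m ≤ n then f n else 0) = ∑' k, f (m + k) := by
  rw [← (add_right_injective m).tsum_eq]
  · simp
  · intro n hn
    have : m ≤ n := by by_contra h; simp [h] at hn
    exact ⟨n - m, Nat.add_sub_cancel' this⟩

lemma sq_tsum_le (d : ℕ → ℝ≥0∞) :
    (∑' n, d n) ^ 2 ≤ 2 * ∑' m, ∑' k, d m * d (m + k) := by
  let e : ℕ → ℕ → ℝ≥0∞ := fun m n ↦ if m ≤ n then d m * d n else 0
  have split (m n : ℕ) : d m * d n ≤ e m n + e n m := by
    rcases le_total m n with h | h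
    · exact le_add_right (by simp [e, h])
    · exact le_add_left (by simp [e, h, mul_comm])
  calc (∑' n, d n) ^ 2 = ∑' m, ∑' n, d m * d n := by
        simp_rw [sq, ENNReal.tsum_mul_left, ENNReal.tsum_mul_right]
    _ ≤ ∑' m, ∑' n, (e m n + e n m) :=
        ENNReal.tsum_le_tsum fun m ↦ ENNReal.tsum_le_tsum (split m)
    _ = ∑' m, ∑' n, e m n + ∑' n, ∑' m, e n m := by
        simp_rw [ENNReal.tsum_add]
        rw [ENNReal.tsum_comm (f := fun m n ↦ e n m)]
    _ = 2 * ∑' m, ∑' k, d m * d (m + k) := by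
        simp_rw [e, tsum_ite_le_eq_tsum_add (fun n ↦ d _ * d n), two_mul]

section Kernel

variable {S T : Type*}

/-- The `n`-step transition probabilities of the chain on `S` with one-step probabilities `K`. -/
def nStep (K : S → S → ℝ≥0∞) : ℕ → S → S → ℝ≥0∞
  | 0, x, y => if x = y then 1 else 0
  | n + 1, x, y => ∑' z, K x z * nStep K n z y

/-- The expected number of visits to `A` of the chain with one-step probabilities `K` started
at `x`, the visit at time `0` included. -/
def expectedVisits (K : S → S → ℝ≥0∞) (A : Set S) (x : S) : ℝ≥0∞ :=
  ∑' n, ∑' y : A, nStep K n x y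

/-- The one-step probabilities of two chains moving independently. -/
def prodStep (K : S → S → ℝ≥0∞) (L : T → T → ℝ≥0∞) (s t : S × T) : ℝ≥0∞ :=
  K s.1 t.1 * L s.2 t.2

variable {K : S → S → ℝ≥0∞}

lemma tsum_nStep_zero_mul (x : S) (f : S → ℝ≥0∞) : ∑' y, nStep K 0 x y * f y = f x := by
  simp only [nStep, ite_mul, one_mul, zero_mul]
  exact tsum_ite_eq' x f

lemma nStep_one (x y : S) : nStep K 1 x y = K x y := by
  simp only [nStep, mul_ite, mul_one, mul_zero]
  exact tsum_ite_eq y _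

lemma nStep_add (m n : ℕ) (x y : S) :
    nStep K (m + n) x y = ∑' z, nStep K m x z * nStep K n z y := by
  induction m generalizing x with
  | zero => rw [tsum_nStep_zero_mul, zero_add]
  | succ m ih =>
    simp only [Nat.add_right_comm m 1 n, nStep, ih, ← ENNReal.tsum_mul_left,
      ← ENNReal.tsum_mul_right, mul_assoc]
    exact ENNReal.tsum_comm

lemma nStep_succ' (n : ℕ) (x y : S) :
    nStep K (n + 1) x y = ∑' z, nStep K n x z * K z y := by
  simp only [nStep_add, nStep_one]

lemma tsum_nStep_mul_indicator (n : ℕ) (A : Set S) (x : S) :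
    ∑' y, nStep K n x y * A.indicator 1 y = ∑' y : A, nStep K n x y := by
  rw [tsum_subtype A (nStep K n x)]
  exact tsum_congr fun y ↦ by by_cases hy : y ∈ A <;> simp [hy]

lemma nStep_prodStep (L : T → T → ℝ≥0∞) (n : ℕ) (s t : S × T) :
    nStep (prodStep K L) n s t = nStep K n s.1 t.1 * nStep L n s.2 t.2 := by
  induction n generalizing s with
  | zero => by_cases h : s.1 = t.1 <;> simp [nStep, Prod.ext_iff, h]
  | succ n ih =>
    simp only [nStep, ih, prodStep, ENNReal.tsum_prod', ← ENNReal.tsum_mul_left,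
      ← ENNReal.tsum_mul_right]
    rw [ENNReal.tsum_comm]
    exact tsum_congr fun _ ↦ tsum_congr fun _ ↦ by ring

lemma nStep_reversible {π : S → ℝ≥0∞} (hπ : ∀ x y, π x * K x y = π y * K y x) (n : ℕ) (x y : S) :
    π x * nStep K n x y = π y * nStep K n y x := by
  induction n generalizing x y with
  | zero =>
    by_cases h : x = y
    · rw [h]
    · simp [nStep, h, Ne.symm h]
  | succ n ih =>
    rw [nStep_succ', nStep, ← ENNReal.tsum_mul_left, ← ENNReal.tsum_mul_left]
    exact tsum_congr fun z ↦ by rw [← mul_assoc, ih, mul_right_comm, hπ, mul_assoc]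

/-- By reversibility `p_n(x,y)²` is comparable to `p_n(x,y) p_n(y,x)`, whose sum over `y` is
the probability `p_{2n}(x,x)` of returning to `x`. -/
lemma tsum_sq_nStep_le {π : S → ℝ≥0∞} (hπ : ∀ x y, π x * K x y = π y * K y x) {A : Set S}
    {M : ℝ≥0∞} (hM : ∀ y ∈ A, π y ≤ M) (x : S) :
    π x * ∑' n, ∑' y : A, nStep K n x y ^ 2 ≤ M * ∑' n, nStep K n x x := by
  have key (n : ℕ) (y : A) :
      π x * nStep K n x y ^ 2 ≤ M * (nStep K n x y * nStep K n y x) := by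
    calc π x * nStep K n x y ^ 2 = π y * (nStep K n x y * nStep K n y x) := by
          rw [sq, ← mul_assoc, nStep_reversible hπ]; ring
      _ ≤ M * (nStep K n x y * nStep K n y x) := by gcongr; exact hM y y.2
  calc π x * ∑' n, ∑' y : A, nStep K n x y ^ 2
      ≤ M * ∑' n, ∑' y : A, nStep K n x y * nStep K n y x := by
        simp_rw [← ENNReal.tsum_mul_left]
        exact ENNReal.tsum_le_tsum fun n ↦ ENNReal.tsum_le_tsum (key n)
    _ ≤ M * ∑' n, nStep K (n + n) x x := by
        gcongr with n
        rw [nStep_add]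
        exact ENNReal.tsum_comp_le_tsum_of_injective Subtype.val_injective
          fun y ↦ nStep K n x y * nStep K n y x
    _ ≤ M * ∑' n, nStep K n x x := by
        gcongr M * ?_
        exact ENNReal.tsum_comp_le_tsum_of_injective (f := fun n : ℕ ↦ n + n)
          (fun m n h ↦ by dsimp only at h; omega) fun n ↦ nStep K n x x

lemma tsum_nStep_le_of_supersolution {x : S} {u : S → ℝ≥0∞}
    (hu : ∀ y, (if y = x then 1 else 0) + ∑' z, K y z * u z ≤ u y) (y : S) :
    ∑' n, nStep K n y x ≤ u y := by
  rw [ENNReal.tsum_eq_iSup_nat]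
  refine iSup_le fun N ↦ ?_
  induction N generalizing y with
  | zero => simp
  | succ N ih =>
    calc ∑ n ∈ Finset.range (N + 1), nStep K n y x
        = (if y = x then 1 else 0) + ∑' z, K y z * ∑ n ∈ Finset.range N, nStep K n z x := by
          simp_rw [Finset.sum_range_succ', add_comm, Finset.mul_sum]
          rw [Summable.tsum_finsetSum fun _ _ ↦ ENNReal.summable]
          rfl
      _ ≤ (if y = x then 1 else 0) + ∑' z, K y z * u z := by gcongr with z; exact ih z
      _ ≤ u y := hu y

end Kernel

section MarkovLaw

variable {S : Type*} [MeasurableSpace S]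

/-- `ν` is the law of the chain with one-step probabilities `K` started at `a`: it has the
corresponding finite-dimensional distributions. -/
def IsMarkovLaw (K : S → S → ℝ≥0∞) (a : S) (ν : Measure (ℕ → S)) : Prop :=
  ∀ (n : ℕ) (w : Fin (n + 1) → S), ν {ω | ∀ i : Fin (n + 1), ω i = w i} =
    (if w 0 = a then 1 else 0) * ∏ i : Fin n, K (w i.castSucc) (w i.succ)

lemma measurable_comp_apply [DiscreteMeasurableSpace S] (f : S → ℝ≥0∞) (n : ℕ) :
    Measurable fun ω : ℕ → S ↦ f (ω n) :=
  Measurable.of_discrete.comp (measurable_pi_apply n)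

variable [Countable S] [DiscreteMeasurableSpace S]

lemma lintegral_prefix (ν : Measure (ℕ → S)) (n : ℕ) (F : (Fin (n + 1) → S) → ℝ≥0∞) :
    ∫⁻ ω, F (fun i ↦ ω i) ∂ν = ∑' w, F w * ν {ω | ∀ i : Fin (n + 1), ω i = w i} := by
  have hm : Measurable (fun (ω : ℕ → S) (i : Fin (n + 1)) ↦ ω i) := by fun_prop
  rw [← lintegral_map (f := F) Measurable.of_discrete hm, lintegral_countable']
  refine tsum_congr fun w ↦ ?_
  rw [Measure.map_apply hm (measurableSet_singleton w)]
  simp only [Set.preimage, Set.mem_singleton_iff, funext_iff]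

variable {K : S → S → ℝ≥0∞} {a : S} {ν : Measure (ℕ → S)}

namespace IsMarkovLaw

lemma lintegral_apply_zero (hν : IsMarkovLaw K a ν) (f : S → ℝ≥0∞) :
    ∫⁻ ω, f (ω 0) ∂ν = f a := by
  refine (lintegral_prefix ν 0 fun w ↦ f (w 0)).trans ?_
  rw [← (Equiv.funUnique (Fin 1) S).symm.tsum_eq]
  have hstart (x : S) : ν {ω | ω 0 = x} = if x = a then 1 else 0 := by
    simpa using hν 0 fun _ ↦ x
  simp [hstart]

lemma lintegral_prefix_mul_apply_succ (hν : IsMarkovLaw K a ν) (n : ℕ)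
    (F : (Fin (n + 1) → S) → ℝ≥0∞) (g : S → ℝ≥0∞) :
    ∫⁻ ω, F (fun i ↦ ω i) * g (ω (n + 1)) ∂ν =
      ∫⁻ ω, F (fun i ↦ ω i) * ∑' t, K (ω n) t * g t ∂ν := by
  have hleft := lintegral_prefix ν (n + 1)
    fun w ↦ F (fun i ↦ w i.castSucc) * g (w (Fin.last (n + 1)))
  have hright := lintegral_prefix ν n fun w ↦ F w * ∑' t, K (w (Fin.last n)) t * g t
  simp only [Fin.val_castSucc, Fin.val_last] at hleft hright
  rw [hleft, hright, ← (Fin.snocEquiv fun _ : Fin (n + 2) ↦ S).tsum_eq, ENNReal.tsum_prod',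
    ENNReal.tsum_comm]
  refine tsum_congr fun w ↦ ?_
  rw [mul_right_comm, ← ENNReal.tsum_mul_left]
  refine tsum_congr fun t ↦ ?_
  simp only [hν _ _, Fin.prod_univ_castSucc, Fin.snocEquiv, Equiv.coe_fn_mk, Fin.succ_last,
    ← Fin.castSucc_succ, ← Fin.castSucc_zero, Fin.snoc_castSucc, Fin.snoc_last]
  ring

lemma lintegral_mul_apply_add (hν : IsMarkovLaw K a ν) (m n : ℕ) (f g : S → ℝ≥0∞) :
    ∫⁻ ω, f (ω m) * g (ω (m + n)) ∂ν = ∫⁻ ω, f (ω m) * ∑' t, nStep K n (ω m) t * g t ∂ν := by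
  induction n generalizing g with
  | zero => simp only [tsum_nStep_zero_mul, add_zero]
  | succ n ih =>
    calc ∫⁻ ω, f (ω m) * g (ω (m + n + 1)) ∂ν
        = ∫⁻ ω, f (ω m) * ∑' t, K (ω (m + n)) t * g t ∂ν :=
          hν.lintegral_prefix_mul_apply_succ (m + n) (fun w ↦ f (w ⟨m, by omega⟩)) g
      _ = ∫⁻ ω, f (ω m) * ∑' s, nStep K n (ω m) s * ∑' t, K s t * g t ∂ν :=
          ih fun s ↦ ∑' t, K s t * g t
      _ = ∫⁻ ω, f (ω m) * ∑' t, nStep K (n + 1) (ω m) t * g t ∂ν := by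
          refine lintegral_congr fun ω ↦ congrArg _ ?_
          simp only [nStep_succ', ← ENNReal.tsum_mul_left, ← ENNReal.tsum_mul_right, mul_assoc]
          exact ENNReal.tsum_comm

lemma tsum_lintegral_indicator (hν : IsMarkovLaw K a ν) (A : Set S) :
    ∑' n, ∫⁻ ω, A.indicator 1 (ω n) ∂ν = expectedVisits K A a := by
  refine tsum_congr fun n ↦ ?_
  have h := hν.lintegral_mul_apply_add 0 n 1 (A.indicator 1)
  simp only [Pi.one_apply, one_mul, zero_add, tsum_nStep_mul_indicator] at h
  exact h.trans (hν.lintegral_apply_zero fun x ↦ ∑' y : A, nStep K n x y)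

lemma tsum_lintegral_indicator_mul (hν : IsMarkovLaw K a ν) (A : Set S) (m : ℕ) :
    ∑' k, ∫⁻ ω, A.indicator 1 (ω m) * A.indicator 1 (ω (m + k)) ∂ν =
      ∫⁻ ω, A.indicator 1 (ω m) * expectedVisits K A (ω m) ∂ν := by
  simp only [hν.lintegral_mul_apply_add, tsum_nStep_mul_indicator]
  rw [← lintegral_tsum fun k ↦ (measurable_comp_apply
    (fun s ↦ A.indicator 1 s * ∑' t : A, nStep K k s t) m).aemeasurable]
  simp only [ENNReal.tsum_mul_left, expectedVisits]

theorem lintegral_sq_visits_le (hν : IsMarkovLaw K a ν) {A : Set S} {C : ℝ≥0∞}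
    (hC : ∀ x ∈ A, expectedVisits K A x ≤ C) :
    ∫⁻ ω, (∑' n, A.indicator 1 (ω n)) ^ 2 ∂ν ≤ 2 * (C * expectedVisits K A a) := by
  have hmeas (m k : ℕ) : Measurable fun ω : ℕ → S ↦
      (A.indicator 1 (ω m) * A.indicator 1 (ω (m + k)) : ℝ≥0∞) :=
    (measurable_comp_apply _ m).mul (measurable_comp_apply _ (m + k))
  have hvisits (x : S) : A.indicator 1 x * expectedVisits K A x ≤ C * A.indicator 1 x := by
    by_cases hx : x ∈ A <;> simp [hx, hC]
  calc ∫⁻ ω, (∑' n, A.indicator 1 (ω n)) ^ 2 ∂ν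
      ≤ ∫⁻ ω, 2 * ∑' m, ∑' k, A.indicator 1 (ω m) * A.indicator 1 (ω (m + k)) ∂ν :=
        lintegral_mono fun ω ↦ sq_tsum_le _
    _ = 2 * ∑' m, ∑' k, ∫⁻ ω, A.indicator 1 (ω m) * A.indicator 1 (ω (m + k)) ∂ν := by
        rw [lintegral_const_mul _ (.tsum fun m ↦ .tsum (hmeas m)),
          lintegral_tsum fun m ↦ (Measurable.tsum (hmeas m)).aemeasurable]
        simp only [lintegral_tsum fun k ↦ (hmeas _ k).aemeasurable]
    _ ≤ 2 * ∑' m, ∫⁻ ω, C * A.indicator 1 (ω m) ∂ν := by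
        simp only [hν.tsum_lintegral_indicator_mul]
        gcongr 2 * ?_
        exact ENNReal.tsum_le_tsum fun m ↦ lintegral_mono fun ω ↦ hvisits (ω m)
    _ = 2 * (C * expectedVisits K A a) := by
        simp only [lintegral_const_mul C (measurable_comp_apply (A.indicator 1) _),
          ENNReal.tsum_mul_left, hν.tsum_lintegral_indicator]

end IsMarkovLaw

end MarkovLaw

/-! ### Discrete potential theory -/

/-- The Dirichlet form `ℰ(f,h)`, polarising `energy`. It is used for functions `f` of finite
support only, for which the sum has finitely many nonzero terms. -/
def dirichletForm (G : SimpleGraph V) (f h : V → ℝ) : ℝ :=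
  (1 / 2) * ∑' p : V × V, if G.Adj p.1 p.2 then (f p.1 - f p.2) * (h p.1 - h p.2) else 0

/-- The unnormalised graph Laplacian, with the sign making it positive. -/
def laplacian (G : SimpleGraph V) [G.LocallyFinite] : (V → ℝ) →ₗ[ℝ] V → ℝ where
  toFun h y := ∑ z ∈ G.neighborFinset y, (h y - h z)
  map_add' f h := by
    ext y
    simp only [Pi.add_apply, add_sub_add_comm, Finset.sum_add_distrib]
  map_smul' c h := by
    ext y
    simp only [Pi.smul_apply, smul_eq_mul, ← mul_sub, ← Finset.mul_sum, RingHom.id_apply]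

/-- `g` is the Green function of the Laplacian on `B` with pole `x` and zero boundary values:
the potential of a unit current entering the network at `x` and leaving it off `B`. -/
structure IsGreenFunction (G : SimpleGraph V) [G.LocallyFinite] (B : Set V) (x : V)
    (g : V → ℝ) : Prop where
  eq_zero_of_notMem : ∀ y ∉ B, g y = 0
  laplacian_eq : ∀ y ∈ B, laplacian G g y = (Pi.single x 1 : V → ℝ) y

section Dirichlet

lemma dirichletForm_comm (G : SimpleGraph V) (f h : V → ℝ) :
    dirichletForm G f h = dirichletForm G h f := by
  simp only [dirichletForm, mul_comm (f _ - f _)]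

lemma dirichletForm_smul_right (G : SimpleGraph V) (c : ℝ) (f h : V → ℝ) :
    dirichletForm G f (c • h) = c * dirichletForm G f h := by
  simp only [dirichletForm, Pi.smul_apply, smul_eq_mul, ← mul_sub, mul_left_comm _ c,
    ← mul_ite_zero, tsum_mul_left]

variable {G : SimpleGraph V} [G.LocallyFinite] {f : V → ℝ}

lemma summable_adj_mul (hf : f.HasFiniteSupport) (k : V → V → ℝ) :
    Summable fun p : V × V ↦ if G.Adj p.1 p.2 then f p.1 * k p.1 p.2 else 0 := by
  refine summable_of_hasFiniteSupport ((hf.biUnion fun y _ ↦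
    ((G.neighborFinset y).finite_toSet.image (Prod.mk y))).subset ?_)
  rintro ⟨y, z⟩ hyz
  simp only [Function.mem_support, ne_eq, ite_eq_right_iff, mul_eq_zero, not_forall,
    not_or] at hyz
  obtain ⟨hadj, hfy, -⟩ := hyz
  exact Set.mem_biUnion hfy ⟨z, by simpa using hadj, rfl⟩

lemma dirichletForm_hasSum (hf : f.HasFiniteSupport) (h : V → ℝ) :
    HasSum (fun p : V × V ↦ if G.Adj p.1 p.2 then (f p.1 - f p.2) * (h p.1 - h p.2) else 0)
      (2 * ∑' y, f y * laplacian G h y) := by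
  let φ : V × V → ℝ := fun p ↦ if G.Adj p.1 p.2 then f p.1 * (h p.1 - h p.2) else 0
  have hφ : Summable φ := summable_adj_mul hf fun y z ↦ h y - h z
  have htsum : ∑' p, φ p = ∑' y, f y * laplacian G h y := by
    rw [hφ.tsum_prod]
    refine tsum_congr fun y ↦ ?_
    rw [tsum_eq_sum (s := G.neighborFinset y) (by simp +contextual [φ]), laplacian,
      LinearMap.coe_mk, AddHom.coe_mk, Finset.mul_sum]
    exact Finset.sum_congr rfl fun z hz ↦ if_pos (by simpa using hz)
  have hswap : HasSum (φ ∘ Prod.swap) (∑' y, f y * laplacian G h y) :=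
    htsum ▸ ((Equiv.prodComm V V).hasSum_iff.2 hφ.hasSum)
  rw [two_mul]
  convert (htsum ▸ hφ.hasSum).add hswap using 2 with p
  simp only [φ, Function.comp_apply, Prod.fst_swap, Prod.snd_swap, G.adj_comm p.2 p.1]
  split_ifs <;> ring

lemma dirichletForm_eq_tsum_mul_laplacian (hf : f.HasFiniteSupport) (h : V → ℝ) :
    dirichletForm G f h = ∑' y, f y * laplacian G h y := by
  rw [dirichletForm, (dirichletForm_hasSum hf h).tsum_eq]
  ring

lemma dirichletForm_sub_right (hf : f.HasFiniteSupport) (h k : V → ℝ) :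
    dirichletForm G f (h - k) = dirichletForm G f h - dirichletForm G f k := by
  simp only [dirichletForm]
  rw [← mul_sub, ← Summable.tsum_sub (dirichletForm_hasSum hf h).summable
    (dirichletForm_hasSum hf k).summable]
  congr! 3 with p
  simp only [Pi.sub_apply]
  split_ifs <;> ring

lemma sq_sub_le_dirichletForm (hf : f.HasFiniteSupport) {x y : V} (hxy : G.Adj x y) :
    (f x - f y) ^ 2 ≤ dirichletForm G f f := by
  have hpair := (dirichletForm_hasSum (G := G) hf f).summable.sum_le_tsum {(x, y), (y, x)}
    fun p _ ↦ by split_ifs; exacts [mul_self_nonneg _, le_rfl]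
  have hne : (x, y) ≠ (y, x) := fun h ↦ hxy.ne (congrArg Prod.fst h)
  simp only [Finset.sum_pair hne, hxy, hxy.symm, if_true] at hpair
  rw [dirichletForm]
  linarith

lemma eq_of_dirichletForm_self_nonpos (hG : G.Preconnected) (hf : f.HasFiniteSupport)
    (h : dirichletForm G f f ≤ 0) (x y : V) : f x = f y := by
  obtain ⟨p⟩ := hG x y
  induction p with
  | nil => rfl
  | cons hadj _ ih =>
    have hsq := (sq_sub_le_dirichletForm hf hadj).trans h
    rw [sub_eq_zero.1 (pow_eq_zero_iff two_ne_zero |>.1 (hsq.antisymm (sq_nonneg _))), ih]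

lemma dirichletForm_comp_self_le {φ : ℝ → ℝ} (hmono : Monotone φ) (hlip : LipschitzWith 1 φ)
    (hf : (φ ∘ f).HasFiniteSupport) :
    dirichletForm G (φ ∘ f) (φ ∘ f) ≤ dirichletForm G (φ ∘ f) f := by
  have hcontr {a b : ℝ} (h : b ≤ a) : φ a - φ b ≤ a - b := by
    simpa [Real.dist_eq, abs_of_nonneg, h, hmono h] using hlip.dist_le_mul a b
  have hmul (a b : ℝ) : (φ a - φ b) * (φ a - φ b) ≤ (φ a - φ b) * (a - b) := by
    rcases le_total b a with h | h
    · exact mul_le_mul_of_nonneg_left (hcontr h) (sub_nonneg.2 (hmono h))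
    · nlinarith [hcontr h, hmono h]
  unfold dirichletForm
  gcongr 1 / 2 * ?_
  refine (dirichletForm_hasSum hf _).summable.tsum_le_tsum (fun p ↦ ?_)
    (dirichletForm_hasSum hf f).summable
  split_ifs
  exacts [hmul _ _, le_rfl]

lemma energy_eq_ofReal_dirichletForm (hf : f.HasFiniteSupport) :
    energy G f = ENNReal.ofReal (dirichletForm G f f) := by
  rw [energy, dirichletForm, ENNReal.ofReal_mul (by norm_num), ENNReal.ofReal_tsum_of_nonneg
    (fun p ↦ by split_ifs; exacts [mul_self_nonneg _, le_rfl])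
    (dirichletForm_hasSum hf f).summable]
  congr 1
  · simp
  · exact tsum_congr fun p ↦ by split_ifs <;> simp [sq]

end Dirichlet

section Green

variable {G : SimpleGraph V} [G.LocallyFinite] {B : Set V} {x y : V} {f g h : V → ℝ}

lemma hasFiniteSupport_of_eq_zero (hB : B.Finite) (hf : ∀ y ∉ B, f y = 0) :
    f.HasFiniteSupport :=
  hB.subset fun y hy ↦ by_contra fun h ↦ hy (hf y h)

theorem exists_isGreenFunction (hG : G.Preconnected) (hB : B.Finite) (hB' : Bᶜ.Nonempty)
    (x : V) : ∃ g, IsGreenFunction G B x g := by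
  have := hB.to_subtype
  let extend : (B → ℝ) →ₗ[ℝ] V → ℝ := Function.ExtendByZero.linearMap ℝ Subtype.val
  let L : (B → ℝ) →ₗ[ℝ] B → ℝ := LinearMap.funLeft ℝ ℝ Subtype.val ∘ₗ laplacian G ∘ₗ extend
  have extend_mem (u : B → ℝ) (y : B) : extend u y = u y :=
    Subtype.val_injective.extend_apply u 0 y
  have extend_notMem (u : B → ℝ) : ∀ y ∉ B, extend u y = 0 := fun y hy ↦
    Function.extend_apply' u (0 : V → ℝ) y fun ⟨z, hz⟩ ↦ hy (hz ▸ z.2)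
  have hL : Function.Injective L := by
    rw [← LinearMap.ker_eq_bot, LinearMap.ker_eq_bot']
    intro u hu
    have hfin := hasFiniteSupport_of_eq_zero hB (extend_notMem u)
    have hzero : dirichletForm G (extend u) (extend u) = 0 := by
      rw [dirichletForm_eq_tsum_mul_laplacian hfin]
      refine (tsum_congr fun y ↦ ?_).trans tsum_zero
      by_cases hy : y ∈ B
      · exact mul_eq_zero_of_right _ (congrFun hu ⟨y, hy⟩)
      · rw [extend_notMem u y hy, zero_mul]
    obtain ⟨v, hv⟩ := hB'
    ext y
    rw [← extend_mem u y, eq_of_dirichletForm_self_nonpos hG hfin hzero.le y v,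
      extend_notMem u v hv, Pi.zero_apply]
  obtain ⟨u, hu⟩ := LinearMap.injective_iff_surjective.1 hL fun y ↦ (Pi.single x 1 : V → ℝ) y
  exact ⟨extend u, extend_notMem u, fun y hy ↦ congrFun hu ⟨y, hy⟩⟩

namespace IsGreenFunction

lemma dirichletForm_eq_pole (hg : IsGreenFunction G B x g) (hB : B.Finite)
    (hf : ∀ y ∉ B, f y = 0) : dirichletForm G f g = f x := by
  have hterm (y : V) : f y * laplacian G g y = if y = x then f x else 0 := by
    by_cases hy : y ∈ B
    · rw [hg.laplacian_eq y hy, Pi.single_apply]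
      split_ifs with hyx <;> simp [hyx]
    · split_ifs with hyx
      · rw [← hyx, hf y hy, zero_mul]
      · rw [hf y hy, zero_mul]
  rw [dirichletForm_eq_tsum_mul_laplacian (hasFiniteSupport_of_eq_zero hB hf), tsum_congr hterm,
    tsum_ite_eq x fun _ ↦ f x]

lemma symm (hg : IsGreenFunction G B x g) (hh : IsGreenFunction G B y h) (hB : B.Finite) :
    g y = h x := by
  rw [← hh.dirichletForm_eq_pole hB hg.eq_zero_of_notMem, dirichletForm_comm,
    hg.dirichletForm_eq_pole hB hh.eq_zero_of_notMem]

/-- The maximum principle: `φ ∘ g` has energy at most `ℰ(φ ∘ g, g) = φ (g x) ≤ 0`. -/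
lemma comp_eq_zero_of_comp_pole_nonpos (hg : IsGreenFunction G B x g) (hG : G.Preconnected)
    (hB : B.Finite) (hB' : Bᶜ.Nonempty) {φ : ℝ → ℝ} (hmono : Monotone φ) (hlip : LipschitzWith 1 φ)
    (hzero : φ 0 = 0) (hx : φ (g x) ≤ 0) (y : V) : φ (g y) = 0 := by
  have hφg : ∀ z ∉ B, (φ ∘ g) z = 0 := fun z hz ↦ by
    rw [Function.comp_apply, hg.eq_zero_of_notMem z hz, hzero]
  have hfin := hasFiniteSupport_of_eq_zero hB hφg
  have henergy : dirichletForm G (φ ∘ g) (φ ∘ g) ≤ 0 :=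
    calc _ ≤ dirichletForm G (φ ∘ g) g := dirichletForm_comp_self_le hmono hlip hfin
      _ = φ (g x) := hg.dirichletForm_eq_pole hB hφg
      _ ≤ 0 := hx
  obtain ⟨v, hv⟩ := hB'
  exact (eq_of_dirichletForm_self_nonpos hG hfin henergy y v).trans (hφg v hv)

lemma nonneg (hg : IsGreenFunction G B x g) (hG : G.Preconnected) (hB : B.Finite)
    (hB' : Bᶜ.Nonempty) (y : V) : 0 ≤ g y :=
  min_eq_right_iff.1 <| hg.comp_eq_zero_of_comp_pole_nonpos hG hB hB' (φ := fun t ↦ min t 0)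
    (monotone_id.min monotone_const) (LipschitzWith.id.min_const 0) (min_self 0)
    (min_le_right _ _) y

lemma le_pole (hg : IsGreenFunction G B x g) (hG : G.Preconnected) (hB : B.Finite)
    (hB' : Bᶜ.Nonempty) (y : V) : g y ≤ g x := by
  have hx := hg.nonneg hG hB hB' x
  have hlip : LipschitzWith 1 fun t ↦ max (t - g x) 0 :=
    (LipschitzWith.of_le_add fun s t ↦ by
      linarith [le_abs_self (s - t), Real.dist_eq s t]).max_const 0
  have := hg.comp_eq_zero_of_comp_pole_nonpos hG hB hB' (φ := fun t ↦ max (t - g x) 0)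
    (fun s t hst ↦ max_le_max_right 0 (sub_le_sub_right hst _)) hlip (by simpa using hx)
    (by simp) y
  linarith [max_eq_right_iff.1 this]

/-- The difference `u = g - h` satisfies `(u x - u y)² ≤ ℰ(u,u) = u x - u y`. -/
lemma pole_le_add_one (hg : IsGreenFunction G B x g) (hh : IsGreenFunction G B y h)
    (hG : G.Preconnected) (hB : B.Finite) (hB' : Bᶜ.Nonempty) (hxy : G.Adj x y) :
    g x ≤ h y + 1 := by
  have hu : ∀ z ∉ B, (g - h) z = 0 := fun z hz ↦ by
    simp [hg.eq_zero_of_notMem z hz, hh.eq_zero_of_notMem z hz]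
  have hfin := hasFiniteSupport_of_eq_zero hB hu
  have hself : dirichletForm G (g - h) (g - h) = (g - h) x - (g - h) y := by
    rw [dirichletForm_sub_right hfin, hg.dirichletForm_eq_pole hB hu,
      hh.dirichletForm_eq_pole hB hu]
  have hsq := hself ▸ sq_sub_le_dirichletForm hfin hxy
  have hone : (g - h) x - (g - h) y ≤ 1 := by nlinarith
  simp only [Pi.sub_apply, hg.symm hh hB] at hone
  linarith [hh.le_pole hG hB hB' x]

lemma pole_le_add_dist (hg : IsGreenFunction G B x g) (hh : IsGreenFunction G B y h)
    (hG : G.Connected) (hB : B.Finite) (hB' : Bᶜ.Nonempty) :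
    g x ≤ h y + G.dist x y := by
  obtain ⟨p, hp⟩ := hG.exists_walk_length_eq_dist x y
  rw [← hp]
  clear hp
  induction p generalizing g with
  | nil => simp [hg.symm hh hB]
  | @cons _ z _ hadj q ih =>
    obtain ⟨k, hk⟩ := exists_isGreenFunction hG.preconnected hB hB' z
    have hstep := hg.pole_le_add_one hk hG.preconnected hB hB' hadj
    have hrest := ih hk hh
    rw [SimpleGraph.Walk.length_cons, Nat.cast_succ]
    linarith

/-- `g / g x` is a competitor in the variational problem defining `effRes`. -/
lemma ofReal_pole_le_effRes (hg : IsGreenFunction G B x g) (hB : B.Finite) :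
    ENNReal.ofReal (g x) ≤ effRes G {x} Bᶜ := by
  rcases le_or_gt (g x) 0 with hx | hx
  · simp [ENNReal.ofReal_of_nonpos hx]
  have hzero : ∀ y ∉ B, ((g x)⁻¹ • g) y = 0 := fun y hy ↦ by
    simp [hg.eq_zero_of_notMem y hy]
  have henergy : energy G ((g x)⁻¹ • g) = (ENNReal.ofReal (g x))⁻¹ := by
    rw [energy_eq_ofReal_dirichletForm (hasFiniteSupport_of_eq_zero hB hzero),
      dirichletForm_smul_right, hg.dirichletForm_eq_pole hB hzero, Pi.smul_apply, smul_eq_mul,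
      inv_mul_cancel₀ hx.ne', mul_one, ENNReal.ofReal_inv_of_pos hx]
  rw [effRes, ← ENNReal.le_inv_iff_le_inv, ← henergy]
  refine iInf₂_le _ ⟨?_, ?_, fun y hy ↦ hzero y hy⟩
  · simp [henergy, hx]
  · simp [hx.ne']

end IsGreenFunction

end Green

/-! ### Collisions of killed walks -/

instance : DiscreteMeasurableSpace (Option V) := ⟨fun _ ↦ trivial⟩

/-- The transition probabilities of the killed walk between vertices; the mass lost at each
step is the probability of being killed. -/
def interiorStep (G : SimpleGraph V) [G.LocallyFinite] (B : Set V) (x y : V) : ℝ≥0∞ :=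
  killedStep G B (some x) (some y)

/-- The states of the pair of walks at which a collision is counted. -/
def collisionSet (B : Set V) : Set (Option V × Option V) :=
  (fun x ↦ (some x, some x)) '' B

lemma collisions_eq_tsum_indicator (B : Set V) (ω : ℕ → Option V × Option V) :
    collisions B ω = ∑' n, (collisionSet B).indicator 1 (ω n) := by
  refine tsum_congr fun n ↦ ?_
  simp only [collisionSet, Set.indicator_apply, Set.mem_image, Prod.ext_iff, Pi.one_apply,
    eq_comm (a := some _)]

section KilledWalk

variable {G : SimpleGraph V} [G.LocallyFinite] {B : Set V} {x y : V} {g : V → ℝ}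

lemma IsKilledPairLaw.isMarkovLaw {ν : Measure (ℕ → Option V × Option V)}
    (hν : IsKilledPairLaw G B x y ν) :
    IsMarkovLaw (prodStep (killedStep G B) (killedStep G B)) (some x, some y) ν := fun n w ↦ by
  rw [hν.2, killedCylProb, killedCylProb, mul_mul_mul_comm, ← Finset.prod_mul_distrib]
  congr 1
  simp only [Prod.ext_iff, ite_and, ite_mul, one_mul, zero_mul]

lemma nStep_killedStep_some (n : ℕ) (x y : V) :
    nStep (killedStep G B) n (some x) (some y) = nStep (interiorStep G B) n x y := by
  have hdead : ∀ n, nStep (killedStep G B) n none (some y) = 0 := by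
    intro n
    induction n with
    | zero => simp [nStep]
    | succ n ih =>
      refine ENNReal.tsum_eq_zero.2 fun z ↦ ?_
      cases z with
      | none => rw [ih, mul_zero]
      | some z => simp [killedStep]
  induction n generalizing x with
  | zero => simp [nStep]
  | succ n ih =>
    rw [nStep, nStep, ← (Option.some_injective V).tsum_eq]
    · simp only [ih, interiorStep]
    · rintro (_ | z) hz
      · simp [hdead] at hz
      · exact Set.mem_range_self z

lemma expectedVisits_collisionSet (x : V) :
    expectedVisits (prodStep (killedStep G B) (killedStep G B)) (collisionSet B)
      (some x, some x) = ∑' n, ∑' y : B, nStep (interiorStep G B) n x y ^ 2 := by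
  have hinj : Set.InjOn (fun y : V ↦ (some y, some y)) B := fun y _ z _ h ↦
    Option.some_injective V (congrArg Prod.fst h)
  refine tsum_congr fun n ↦ ?_
  rw [collisionSet, tsum_image _ hinj]
  simp only [nStep_prodStep, nStep_killedStep_some, sq]

lemma degree_mul_interiorStep (x y : V) :
    G.degree x * interiorStep G B x y = G.degree y * interiorStep G B y x := by
  have hcancel {x y : V} (h : G.Adj x y) : (G.degree x : ℝ≥0∞) * (G.degree x : ℝ≥0∞)⁻¹ = 1 :=
    ENNReal.mul_inv_cancel (Nat.cast_ne_zero.2 h.degree_pos_left.ne') (natCast_ne_top _)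
  have hsymm : (y ∈ B ∧ G.Adj y x ∧ x ∈ B) ↔ (x ∈ B ∧ G.Adj x y ∧ y ∈ B) := by
    rw [G.adj_comm]; tauto
  simp only [interiorStep, killedStep, hsymm]
  split_ifs with h
  · rw [hcancel h.2.1, hcancel h.2.1.symm]
  · simp

lemma tsum_interiorStep_mul_le (y : V) (u : V → ℝ≥0∞) :
    ∑' z, interiorStep G B y z * u z ≤
      (G.degree y : ℝ≥0∞)⁻¹ * ∑ z ∈ G.neighborFinset y, u z := by
  rw [tsum_eq_sum (s := G.neighborFinset y) (by simp +contextual [interiorStep, killedStep]),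
    Finset.mul_sum]
  gcongr with z
  rw [interiorStep, killedStep]
  split_ifs
  exacts [le_rfl, zero_le]

lemma IsGreenFunction.degree_mul_ofReal (hg : IsGreenFunction G B x g) (hG : G.Preconnected)
    (hB : B.Finite) (hB' : Bᶜ.Nonempty) (hy : y ∈ B) :
    G.degree y * ENNReal.ofReal (g y) =
      ∑ z ∈ G.neighborFinset y, ENNReal.ofReal (g z) + if y = x then 1 else 0 := by
  have hnonneg := hg.nonneg hG hB hB'
  have hlap : G.degree y * g y = ∑ z ∈ G.neighborFinset y, g z + if y = x then 1 else 0 := by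
    have := hg.laplacian_eq y hy
    rw [laplacian, LinearMap.coe_mk, AddHom.coe_mk, Finset.sum_sub_distrib, Finset.sum_const,
      G.card_neighborFinset_eq_degree, nsmul_eq_mul, Pi.single_apply] at this
    linarith
  rw [← ENNReal.ofReal_natCast, ← ENNReal.ofReal_mul (Nat.cast_nonneg _), hlap,
    ENNReal.ofReal_add (Finset.sum_nonneg fun z _ ↦ hnonneg z) (by split_ifs <;> simp),
    ENNReal.ofReal_sum_of_nonneg fun z _ ↦ hnonneg z]
  split_ifs <;> simp

lemma IsGreenFunction.tsum_nStep_interiorStep_le [Nontrivial V]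
    (hg : IsGreenFunction G B x g) (hG : G.Preconnected) (hB : B.Finite)
    (hB' : Bᶜ.Nonempty) (hx : x ∈ B) :
    ∑' n, nStep (interiorStep G B) n x x ≤ G.degree x * ENNReal.ofReal (g x) := by
  refine tsum_nStep_le_of_supersolution (u := fun y ↦ G.degree x * ENNReal.ofReal (g y))
    (fun y ↦ ?_) x
  by_cases hy : y ∈ B
  · have hdeg : (G.degree y : ℝ≥0∞) ≠ 0 :=
      Nat.cast_ne_zero.2 (hG.degree_pos_of_nontrivial y).ne'
    have hpole : (if y = x then 1 else 0) =
        G.degree x * ((G.degree y : ℝ≥0∞)⁻¹ * if y = x then 1 else 0) := by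
      split_ifs with hyx
      · rw [mul_one, ← hyx, ENNReal.mul_inv_cancel hdeg (natCast_ne_top _)]
      · simp
    calc _ ≤ (if y = x then 1 else 0) + (G.degree y : ℝ≥0∞)⁻¹ *
          ∑ z ∈ G.neighborFinset y, G.degree x * ENNReal.ofReal (g z) := by
          gcongr; exact tsum_interiorStep_mul_le y _
      _ = G.degree x * ((G.degree y : ℝ≥0∞)⁻¹ * (G.degree y * ENNReal.ofReal (g y))) := by
          rw [hg.degree_mul_ofReal hG hB hB' hy, ← Finset.mul_sum, mul_add, mul_add, ← hpole,
            mul_left_comm, add_comm]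
      _ = G.degree x * ENNReal.ofReal (g y) := by
          rw [ENNReal.inv_mul_cancel_left hdeg (natCast_ne_top _)]
  · have hyx : y ≠ x := fun h ↦ hy (h ▸ hx)
    simp [hy, hyx, interiorStep, killedStep]

lemma IsGreenFunction.expectedVisits_collisionSet_le [Nontrivial V]
    (hg : IsGreenFunction G B x g) (hG : G.Preconnected) (hB : B.Finite)
    (hB' : Bᶜ.Nonempty) (hx : x ∈ B) {D : ℕ} (hdeg : ∀ y ∈ B, G.degree y ≤ D) :
    expectedVisits (prodStep (killedStep G B) (killedStep G B)) (collisionSet B)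
      (some x, some x) ≤ D * ENNReal.ofReal (g x) := by
  have hpos : (G.degree x : ℝ≥0∞) ≠ 0 :=
    Nat.cast_ne_zero.2 (hG.degree_pos_of_nontrivial x).ne'
  rw [expectedVisits_collisionSet, ← ENNReal.mul_le_mul_iff_right hpos (natCast_ne_top _)]
  calc _ ≤ D * ∑' n, nStep (interiorStep G B) n x x :=
        tsum_sq_nStep_le degree_mul_interiorStep (fun y hy ↦ Nat.cast_le.2 (hdeg y hy)) x
    _ ≤ D * (G.degree x * ENNReal.ofReal (g x)) := by
        gcongr; exact hg.tsum_nStep_interiorStep_le hG hB hB' hx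
    _ = G.degree x * (D * ENNReal.ofReal (g x)) := mul_left_comm _ _ _

end KilledWalk

theorem second_moment_bound_general (G : SimpleGraph V) [G.LocallyFinite]
    (hconn : G.Connected) {o : V} {D r : ℕ} {B : Set V} (hdeg : ∀ x ∈ B, G.degree x ≤ D)
    (ho : o ∈ B) (hBr : ∀ x ∈ B, G.dist o x ≤ r) (hB' : Bᶜ.Nonempty)
    {ν : Measure (ℕ → Option V × Option V)} (hν : IsKilledPairLaw G B o o ν) :
    ∫⁻ ω, collisions B ω ^ 2 ∂ν ≤
      2 * D ^ 2 * effRes G {o} Bᶜ * (effRes G {o} Bᶜ + r) := by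
  have hcount := countable_of_connected_locallyFinite G hconn
  have hB : B.Finite := (finite_setOf_dist_le G hconn o r).subset hBr
  have : Nontrivial V := let ⟨v, hv⟩ := hB'; ⟨o, v, fun h ↦ hv (h ▸ ho)⟩
  obtain ⟨g, hg⟩ := exists_isGreenFunction hconn.preconnected hB hB' o
  have hres : ENNReal.ofReal (g o) ≤ effRes G {o} Bᶜ := hg.ofReal_pole_le_effRes hB
  have hvisits : ∀ s ∈ collisionSet B,
      expectedVisits (prodStep (killedStep G B) (killedStep G B)) (collisionSet B) s ≤
        D * (effRes G {o} Bᶜ + r) := by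
    rintro _ ⟨x, hx, rfl⟩
    obtain ⟨h, hh⟩ := exists_isGreenFunction hconn.preconnected hB hB' x
    have hpole : h x ≤ g o + r := (hh.pole_le_add_dist hg hconn hB hB').trans <| by
      gcongr; exact G.dist_comm ▸ hBr x hx
    refine (hh.expectedVisits_collisionSet_le hconn.preconnected hB hB' hx hdeg).trans ?_
    gcongr
    calc ENNReal.ofReal (h x) ≤ ENNReal.ofReal (g o + r) := ENNReal.ofReal_le_ofReal hpole
      _ ≤ ENNReal.ofReal (g o) + r := by simpa using ENNReal.ofReal_add_le (p := g o) (q := r)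
      _ ≤ effRes G {o} Bᶜ + r := by gcongr
  simp only [collisions_eq_tsum_indicator]
  calc _ ≤ _ := hν.isMarkovLaw.lintegral_sq_visits_le hvisits
    _ ≤ 2 * (D * (effRes G {o} Bᶜ + r) * (D * effRes G {o} Bᶜ)) := by
        gcongr
        exact (hg.expectedVisits_collisionSet_le hconn.preconnected hB hB' ho hdeg).trans
          (by gcongr)
    _ = 2 * D ^ 2 * effRes G {o} Bᶜ * (effRes G {o} Bᶜ + r) := by ring

/-- If every vertex of `G` has degree at most `6` and
`R_eff(0, V∖B_r) ≤ r`, then the number of collisions of two independent simple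
random walks on `G` killed upon exiting the graph-metric ball `B_r`, both
started at `0`, satisfies `E₀₀(Z_{B_r}²) ≤ 144r² + 6r`. -/
theorem second_moment_bound
    (G : SimpleGraph V) [G.LocallyFinite] (hconn : G.Connected) (hinf : Infinite V)
    (o : V) (hdeg : ∀ x : V, G.degree x ≤ 6)
    (r : ℕ) (hr : 1 ≤ r)
    (Br : Set V) (hBr : Br = {x : V | G.dist o x ≤ r})
    (hup : effRes G {o} Brᶜ ≤ (r : ℝ≥0∞))
    (ν : Measure (ℕ → Option V × Option V)) (hν : IsKilledPairLaw G Br o o ν) :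
    ∫⁻ ω, (collisions Br ω) ^ 2 ∂ν ≤ 144 * r ^ 2 + 6 * r := by
  have hmem (x : V) : x ∈ Br ↔ G.dist o x ≤ r := by rw [hBr, Set.mem_ofPred_eq]
  have hcompl : Brᶜ.Nonempty :=
    (hBr ▸ finite_setOf_dist_le G hconn o r).infinite_compl.nonempty
  calc _ ≤ 2 * (6 : ℕ) ^ 2 * effRes G {o} Brᶜ * (effRes G {o} Brᶜ + r) :=
        second_moment_bound_general G hconn (fun x _ ↦ hdeg x) (by simp [hmem])
          (fun x ↦ (hmem x).1) hcompl hν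
    _ ≤ 2 * (6 : ℕ) ^ 2 * r * (r + r) := by gcongr
    _ = 144 * r ^ 2 := by push_cast; ring
    _ ≤ 144 * r ^ 2 + 6 * r := le_self_add

end
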